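/- arXiv:1611.07453 — 2 statements merged into one kernel-verified Lean document; each statement's English description precedes it below -/
import Mathlib

section
/- Let G be a finitely generated group and H a normal subgroup of G with canonical projection p : G → G/H. Suppose there is a finite collection 𝒜 of finitely generated subgroups of G such that (1) the union of all subgroups in 𝒜 generates G and A ∩ H is finitely generated for each A ∈ 𝒜, and (2) for each pair A, A' ∈ 𝒜 there is a sequence A = A_1, A_2, ..., A_n = A' of subgroups in 𝒜 with p(A_i ∩ A_{i+1}) a finite-index subgroup of G/H for each i ∈ {1, ..., n−1}. Then H is finitely generated and the distortion Dist_G^H is dominated by the function f(n) = n · max{ Dist_A^{A∩H}(n) : A ∈ 𝒜 }. -/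
/-- The word length of `g` with respect to a set `S` of letters. -/
noncomputable def wordLength {G : Type*} [Group G] (S : Set G) (g : G) : ℕ :=
  sInf {n | ∃ l : List G, l.length = n ∧ (∀ x ∈ l, x ∈ S ∨ x⁻¹ ∈ S) ∧ l.prod = g}

/-- The distortion function: `Dist(r) = max { |h|_T : h ∈ H, |h|_S ≤ r }`. -/
noncomputable def distortion {G : Type*} [Group G] (S T : Set G) (H : Subgroup G)
    (r : ℕ) : ℕ :=
  sSup {n | ∃ h ∈ H, wordLength S h ≤ r ∧ wordLength T h = n}

/-- `f ⪯ g`: there are positive constants `A, B, C, D` such that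
`f x ≤ A * g (B * x) + C * x` for all `x > D`. -/
def Dominated (f g : ℕ → ℕ) : Prop :=
  ∃ A B C D : ℕ, 0 < A ∧ 0 < B ∧ 0 < C ∧ ∀ x : ℕ, D < x → f x ≤ A * g (B * x) + C * x

/-!
To transport `m` past `w` from `A` to `B` is to write `m * w = k * w * m'` with `k ∈ H` and
`m' ∈ B` not much longer than `m`; call it cheap if `|k| ≲ f |m|`, where `f` bounds the distortion
of all the subgroups `A ∩ H`.

* If `w ∈ A`, then `m` can be transported past `w` from `A` to `A` with `k = 1`.
* If `A ∩ B` has finite index modulo `H`, then every `m ∈ A` that lies in a suitable normal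
  subgroup `P ≥ H` of finite index agrees modulo `H` with some `m' ∈ A ∩ B` of comparable length,
  so that `k = m * m'⁻¹` lies in `A ∩ H` and `m` can be cheaply transported past `1` from `A` to
  `B`.
* Cheap transports compose. As the subgroups generate `G` and are joined by chains, `m` can be
  cheaply transported past every `w ∈ G` between any two of them.

Applied to `h ∈ H` in place of `w`, and from `A` to itself, this shows that the conjugate
`m * h * m⁻¹ = k * h * (m' * m⁻¹)` costs at most `≲ f |m|`. An element of `H` of length `n` in `G`
is a product of `n` conjugates of this kind, with `h` from a finite set and `|m| ≲ n`, and one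
element of `A ∩ H` of length `≲ n`; its length in `H` is therefore `≲ n * f n`.
-/

section

open scoped Pointwise

open Relation

variable {G : Type*} [Group G]

/-- The ball of radius `n` about `1` in the word metric of `S`. It is encoded as a power of a set,
so that balls multiply by `pow_add`. -/
def wordBall (S : Set G) (n : ℕ) : Set G := (insert 1 (S ∪ S⁻¹)) ^ n

section WordBall

variable {S T : Set G} {m n : ℕ} {x y : G}

theorem wordBall_add (S : Set G) (m n : ℕ) :
    wordBall S (m + n) = wordBall S m * wordBall S n := pow_add _ _ _

theorem wordBall_one_pow (S : Set G) (n : ℕ) : wordBall S 1 ^ n = wordBall S n := by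
  rw [wordBall, pow_one, wordBall]

theorem wordBall_pow (S : Set G) (m n : ℕ) : wordBall S m ^ n = wordBall S (m * n) :=
  (pow_mul _ _ _).symm

theorem mem_wordBall_one : x ∈ wordBall S 1 ↔ x = 1 ∨ x ∈ S ∨ x⁻¹ ∈ S := by
  simp only [wordBall, pow_one, Set.mem_insert_iff, Set.mem_union, Set.mem_inv]

theorem subset_wordBall_one (S : Set G) : S ⊆ wordBall S 1 :=
  fun _ hx => mem_wordBall_one.2 (.inr (.inl hx))

theorem one_mem_wordBall (S : Set G) (n : ℕ) : (1 : G) ∈ wordBall S n :=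
  Set.one_mem_pow (Set.mem_insert _ _)

@[gcongr]
theorem wordBall_mono (hST : S ⊆ T) (hmn : m ≤ n) : wordBall S m ⊆ wordBall T n :=
  Set.pow_subset_pow
    (Set.insert_subset_insert (Set.union_subset_union hST (Set.inv_subset_inv.2 hST)))
    (Set.mem_insert _ _) hmn

theorem mul_mem_wordBall (hx : x ∈ wordBall S m) (hy : y ∈ wordBall S n) :
    x * y ∈ wordBall S (m + n) :=
  (wordBall_add S m n).superset (Set.mul_mem_mul hx hy)

theorem inv_mem_wordBall (hx : x ∈ wordBall S n) : x⁻¹ ∈ wordBall S n := by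
  have letters_inv : (insert 1 (S ∪ S⁻¹))⁻¹ = insert 1 (S ∪ S⁻¹) := by
    rw [Set.inv_insert, Set.union_inv, inv_inv, inv_one, Set.union_comm]
  rwa [wordBall, ← Set.mem_inv, ← inv_pow, letters_inv]

theorem div_mem_wordBall (hx : x ∈ wordBall S m) (hy : y ∈ wordBall S n) :
    x / y ∈ wordBall S (m + n) :=
  div_eq_mul_inv x y ▸ mul_mem_wordBall hx (inv_mem_wordBall hy)

theorem wordBall_subset_subgroup {K : Subgroup G} (hSK : S ⊆ K) (n : ℕ) : wordBall S n ⊆ K :=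
  Subgroup.pow_subset (Set.insert_subset K.one_mem
    (Set.union_subset hSK fun _ hx => K.inv_mem_iff.1 (hSK hx)))

theorem wordBall_image {G' : Type*} [Group G'] (φ : G →* G') (S : Set G) (n : ℕ) :
    wordBall (φ '' S) n = φ '' wordBall S n := by
  rw [wordBall, wordBall, Set.image_pow, Set.image_insert_eq, Set.image_union, Set.image_inv,
    map_one]

theorem wordBall_finite (hS : S.Finite) (n : ℕ) : (wordBall S n).Finite := by
  induction n with
  | zero => exact Set.finite_singleton 1
  | succ n ih => exact ih.mul ((hS.union hS.inv).insert 1)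

theorem wordBall_subset_wordBall_mul {c : ℕ} (hS : S ⊆ wordBall T c) (n : ℕ) :
    wordBall S n ⊆ wordBall T (c * n) := by
  have letters_subset : wordBall S 1 ⊆ wordBall T c := fun x hx => by
    rcases mem_wordBall_one.1 hx with rfl | hx | hx
    · exact one_mem_wordBall T c
    · exact hS hx
    · exact inv_inv x ▸ inv_mem_wordBall (hS hx)
  rw [← wordBall_one_pow, ← wordBall_pow]
  exact Set.pow_subset_pow_left letters_subset

theorem exists_mem_wordBall (hx : x ∈ Subgroup.closure S) : ∃ n, x ∈ wordBall S n := by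
  induction hx using Subgroup.closure_induction with
  | mem x hx => exact ⟨1, subset_wordBall_one S hx⟩
  | one => exact ⟨0, one_mem_wordBall S 0⟩
  | mul x y _ _ hx hy => exact hx.elim fun _ hx => hy.elim fun _ hy => ⟨_, mul_mem_wordBall hx hy⟩
  | inv x _ hx => exact hx.imp fun _ => inv_mem_wordBall

theorem exists_subset_wordBall {F : Set G} (hF : F.Finite) (hFS : F ⊆ Subgroup.closure S) :
    ∃ n, F ⊆ wordBall S n := by
  choose! radius hradius using fun x (hx : x ∈ F) => exists_mem_wordBall (hFS hx)
  obtain ⟨n, hn⟩ := (hF.image radius).bddAbove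
  exact ⟨n, fun x hx => wordBall_mono subset_rfl (hn ⟨x, hx, rfl⟩) (hradius x hx)⟩

theorem list_prod_mem_wordBall {l : List G} (hl : ∀ y ∈ l, y ∈ S ∨ y⁻¹ ∈ S) :
    l.prod ∈ wordBall S l.length := by
  induction l with
  | nil => exact one_mem_wordBall S 0
  | cons y l ih =>
    rw [List.forall_mem_cons] at hl
    rw [List.prod_cons, List.length_cons, add_comm]
    exact mul_mem_wordBall (mem_wordBall_one.2 (.inr hl.1)) (ih hl.2)

theorem exists_list_of_mem_wordBall (hx : x ∈ wordBall S n) :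
    ∃ l : List G, l.length ≤ n ∧ (∀ y ∈ l, y ∈ S ∨ y⁻¹ ∈ S) ∧ l.prod = x := by
  induction n generalizing x with
  | zero => exact ⟨[], le_rfl, by simp, (Set.mem_singleton_iff.1 hx).symm⟩
  | succ n ih =>
    rw [add_comm, wordBall_add] at hx
    obtain ⟨s, hs, y, hy, rfl⟩ := hx
    obtain ⟨l, hln, hl, rfl⟩ := ih hy
    rcases mem_wordBall_one.1 hs with rfl | hs
    · exact ⟨l, hln.trans n.le_succ, hl, (one_mul _).symm⟩
    · exact ⟨s :: l, Nat.succ_le_succ hln, List.forall_mem_cons.2 ⟨hs, hl⟩, List.prod_cons⟩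

theorem wordLength_le_of_mem_wordBall (hx : x ∈ wordBall S n) : wordLength S x ≤ n := by
  obtain ⟨l, hln, hl⟩ := exists_list_of_mem_wordBall hx
  exact le_trans (Nat.sInf_le ⟨l, rfl, hl⟩) hln

theorem mem_wordBall_wordLength (hx : x ∈ Subgroup.closure S) :
    x ∈ wordBall S (wordLength S x) := by
  obtain ⟨n, hn⟩ := exists_mem_wordBall hx
  obtain ⟨l, -, hl⟩ := exists_list_of_mem_wordBall hn
  have shortest : wordLength S x ∈ {n | ∃ l : List G, l.length = n ∧
      (∀ y ∈ l, y ∈ S ∨ y⁻¹ ∈ S) ∧ l.prod = x} := Nat.sInf_mem ⟨_, l, rfl, hl⟩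
  obtain ⟨l', hlength, hl', hprod⟩ := shortest
  rw [← hlength, ← hprod]
  exact list_prod_mem_wordBall hl'

end WordBall

section Distortion

variable {S T : Set G} {H : Subgroup G}

theorem bddAbove_wordLength (hS : S.Finite) (hHS : H ≤ Subgroup.closure S) (r : ℕ) :
    BddAbove {n | ∃ h ∈ H, wordLength S h ≤ r ∧ wordLength T h = n} := by
  refine (((wordBall_finite hS r).image (wordLength T)).subset ?_).bddAbove
  rintro _ ⟨h, hH, hr, rfl⟩
  exact ⟨h, wordBall_mono subset_rfl hr (mem_wordBall_wordLength (hHS hH)), rfl⟩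

theorem distortion_monotone (hS : S.Finite) (hHS : H ≤ Subgroup.closure S) :
    Monotone (distortion S T H) := by
  refine fun r s hrs => csSup_le' ?_
  rintro _ ⟨h, hH, hr, rfl⟩
  exact le_csSup (bddAbove_wordLength hS hHS s) ⟨h, hH, hr.trans hrs, rfl⟩

theorem wordBall_inter_subset_wordBall_distortion (hS : S.Finite)
    (hHS : H ≤ Subgroup.closure S) (hHT : H ≤ Subgroup.closure T) (r : ℕ) :
    wordBall S r ∩ H ⊆ wordBall T (distortion S T H r) := fun h ⟨hr, hH⟩ =>
  wordBall_mono subset_rfl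
    (le_csSup (bddAbove_wordLength hS hHS r) ⟨h, hH, wordLength_le_of_mem_wordBall hr, rfl⟩)
    (mem_wordBall_wordLength (hHT hH))

theorem distortion_le {n r : ℕ} (hHS : H ≤ Subgroup.closure S)
    (hball : wordBall S r ∩ H ⊆ wordBall T n) : distortion S T H r ≤ n := by
  refine csSup_le' ?_
  rintro _ ⟨h, hH, hr, rfl⟩
  exact wordLength_le_of_mem_wordBall
    (hball ⟨wordBall_mono subset_rfl hr (mem_wordBall_wordLength (hHS hH)), hH⟩)

end Distortion

/-- The sets `K r` have word length at most `f r` in `H`, up to constants: they lie in the balls of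
radius `C * f (C * (r + 1))` of one finite subset `T` of `H`. The argument is `r + 1` so that a
single constant `C` dominates every affine function of `r`. -/
def HasCost (H : Subgroup G) (f : ℕ → ℕ) (K : ℕ → Set G) : Prop :=
  ∃ T : Set G, T.Finite ∧ T ⊆ H ∧ ∃ C, ∀ r, K r ⊆ wordBall T (C * f (C * (r + 1)))

namespace HasCost

variable {H : Subgroup G} {f : ℕ → ℕ} {K L : ℕ → Set G}

theorem mono (hL : HasCost H f L) (hKL : ∀ r, K r ⊆ L r) : HasCost H f K := by
  obtain ⟨T, hTfin, hTH, C, hC⟩ := hL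
  exact ⟨T, hTfin, hTH, C, fun r => (hKL r).trans (hC r)⟩

theorem subset (hK : HasCost H f K) (r : ℕ) : K r ⊆ H := by
  obtain ⟨T, -, hTH, C, hC⟩ := hK
  exact (hC r).trans (wordBall_subset_subgroup hTH _)

theorem singleton_one (H : Subgroup G) (f : ℕ → ℕ) : HasCost H f fun _ => {1} :=
  ⟨∅, Set.finite_empty, Set.empty_subset _, 0, fun _ =>
    Set.singleton_subset_iff.2 (one_mem_wordBall _ _)⟩

theorem const (hpos : ∀ n, 0 < f n) {F : Set G} (hF : F.Finite) (hFH : F ⊆ H) :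
    HasCost H f fun _ => F :=
  ⟨F, hF, hFH, 1, fun _ => (subset_wordBall_one F).trans
    (wordBall_mono subset_rfl (Nat.mul_pos one_pos (hpos _)))⟩

theorem conj [H.Normal] (hK : HasCost H f K) (w : G) :
    HasCost H f fun r => MulAut.conj w '' K r := by
  obtain ⟨T, hTfin, hTH, C, hC⟩ := hK
  refine ⟨MulAut.conj w '' T, hTfin.image _, ?_, C, fun r => ?_⟩
  · rintro _ ⟨t, ht, rfl⟩
    exact Subgroup.Normal.conj_mem ‹_› t (hTH ht) w
  · exact (Set.image_mono (hC r)).trans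
      (wordBall_image (MulAut.conj w).toMonoidHom T _).superset

variable (hf : Monotone f)
include hf

theorem comp_affine (hK : HasCost H f K) (c : ℕ) : HasCost H f fun r => K (c * (r + 1)) := by
  obtain ⟨T, hTfin, hTH, C, hC⟩ := hK
  refine ⟨T, hTfin, hTH, C * (c + 1), fun r => (hC _).trans (wordBall_mono subset_rfl ?_)⟩
  have affine_le : C * (c * (r + 1) + 1) ≤ C * (c + 1) * (r + 1) := by
    rw [mul_assoc]
    gcongr
    linarith
  exact Nat.mul_le_mul (Nat.le_mul_of_pos_right C c.succ_pos) (hf affine_le)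

theorem exists_common (hK : HasCost H f K) (hL : HasCost H f L) :
    ∃ T : Set G, T.Finite ∧ T ⊆ H ∧ ∃ C, ∀ r,
      K r ⊆ wordBall T (C * f (C * (r + 1))) ∧ L r ⊆ wordBall T (C * f (C * (r + 1))) := by
  obtain ⟨T₁, hT₁fin, hT₁H, C₁, hC₁⟩ := hK
  obtain ⟨T₂, hT₂fin, hT₂H, C₂, hC₂⟩ := hL
  have radius_mono {C C' : ℕ} (h : C ≤ C') (r : ℕ) :
      C * f (C * (r + 1)) ≤ C' * f (C' * (r + 1)) :=
    Nat.mul_le_mul h (hf (Nat.mul_le_mul_right _ h))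
  exact ⟨T₁ ∪ T₂, hT₁fin.union hT₂fin, Set.union_subset hT₁H hT₂H, max C₁ C₂, fun r =>
    ⟨(hC₁ r).trans (wordBall_mono Set.subset_union_left (radius_mono (le_max_left _ _) r)),
      (hC₂ r).trans (wordBall_mono Set.subset_union_right (radius_mono (le_max_right _ _) r))⟩⟩

theorem union (hK : HasCost H f K) (hL : HasCost H f L) : HasCost H f fun r => K r ∪ L r := by
  obtain ⟨T, hTfin, hTH, C, hC⟩ := exists_common hf hK hL
  exact ⟨T, hTfin, hTH, C, fun r => Set.union_subset (hC r).1 (hC r).2⟩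

theorem biUnion {ι : Type*} {I : Set ι} (hI : I.Finite) {K : ι → ℕ → Set G}
    (hK : ∀ i ∈ I, HasCost H f (K i)) : HasCost H f fun r => ⋃ i ∈ I, K i r := by
  induction I, hI using Set.Finite.induction_on with
  | empty => exact (singleton_one H f).mono fun r => by simp
  | insert _ _ ih =>
    simp only [Set.biUnion_insert]
    rw [Set.forall_mem_insert] at hK
    exact hK.1.union hf (ih hK.2)

theorem mul (hK : HasCost H f K) (hL : HasCost H f L) : HasCost H f fun r => K r * L r := by
  obtain ⟨T, hTfin, hTH, C, hC⟩ := exists_common hf hK hL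
  refine ⟨T, hTfin, hTH, 2 * C, fun r => ?_⟩
  calc K r * L r
      ⊆ wordBall T (C * f (C * (r + 1)) + C * f (C * (r + 1))) :=
        wordBall_add T _ _ ▸ Set.mul_subset_mul (hC r).1 (hC r).2
    _ ⊆ wordBall T (2 * C * f (2 * C * (r + 1))) := by
        rw [← two_mul, mul_assoc 2 C (f _)]
        gcongr
        exact hf (Nat.mul_le_mul_right _ (Nat.le_mul_of_pos_left C two_pos))

theorem pow_mul (hK : HasCost H f K) (hL : HasCost H f L) :
    HasCost H (fun n => n * f n) fun n => K n ^ n * L n := by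
  obtain ⟨T, hTfin, hTH, C, hC⟩ := exists_common hf hK hL
  refine ⟨T, hTfin, hTH, C, fun n => ?_⟩
  calc K n ^ n * L n
      ⊆ wordBall T (C * f (C * (n + 1)) * n + C * f (C * (n + 1))) := by
        rw [wordBall_add, ← wordBall_pow]
        exact Set.mul_subset_mul (Set.pow_subset_pow_left (hC n).1) (hC n).2
    _ ⊆ wordBall T (C * (C * (n + 1) * f (C * (n + 1)))) := by
        refine wordBall_mono subset_rfl ?_
        calc C * f (C * (n + 1)) * n + C * f (C * (n + 1))
            = C * ((n + 1) * f (C * (n + 1))) := by ring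
          _ ≤ C * C * ((n + 1) * f (C * (n + 1))) := Nat.mul_le_mul_right _ C.le_mul_self
          _ = C * (C * (n + 1) * f (C * (n + 1))) := by ring

end HasCost

theorem HasCost.fg {H : Subgroup G} {f : ℕ → ℕ} {S : Set G} (hHS : H ≤ Subgroup.closure S)
    (hS : HasCost H f fun n => wordBall S n ∩ H) : H.FG := by
  obtain ⟨T, hTfin, hTH, C, hC⟩ := hS
  refine (Subgroup.fg_iff H).2 ⟨T, le_antisymm ((Subgroup.closure_le H).2 hTH) fun h hH => ?_,
    hTfin⟩
  obtain ⟨n, hn⟩ := exists_mem_wordBall (hHS hH)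
  exact wordBall_subset_subgroup Subgroup.subset_closure _ (hC n ⟨hn, hH⟩)

theorem HasCost.dominated_distortion {H : Subgroup G} {δ : ℕ → ℕ} (hδ : Monotone δ)
    {S T : Set G} (hHS : H ≤ Subgroup.closure S) (hHT : H ≤ Subgroup.closure T)
    (hS : HasCost H (fun n => n * (δ n + 1)) fun n => wordBall S n ∩ H) :
    Dominated (distortion S T H) fun n => n * δ n := by
  obtain ⟨T₀, hT₀fin, hT₀H, C, hC⟩ := hS
  obtain ⟨c, hc⟩ := exists_subset_wordBall hT₀fin (hT₀H.trans hHT)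
  refine ⟨c * C + 1, 2 * C + 1, c * C * (2 * C + 1) + 1, 0, by simp, by simp, by simp,
    fun n hn => ?_⟩
  have affine_le : C * (n + 1) ≤ (2 * C + 1) * n := by nlinarith
  calc distortion S T H n
      ≤ c * (C * (C * (n + 1) * (δ (C * (n + 1)) + 1))) :=
        distortion_le hHS ((hC n).trans (wordBall_subset_wordBall_mul hc _))
    _ ≤ c * (C * ((2 * C + 1) * n * (δ ((2 * C + 1) * n) + 1))) := by
        gcongr
        exact hδ affine_le
    _ = c * C * ((2 * C + 1) * n * δ ((2 * C + 1) * n)) + c * C * (2 * C + 1) * n := by ring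
    _ ≤ (c * C + 1) * ((2 * C + 1) * n * δ ((2 * C + 1) * n)) +
          (c * C * (2 * C + 1) + 1) * n := by gcongr <;> exact Nat.le_succ _

theorem exists_section_map_one (P : Subgroup G) :
    ∃ τ : G ⧸ P → G, (∀ q, (τ q : G ⧸ P) = q) ∧ τ (1 : G) = 1 := by
  obtain ⟨p, hp⟩ := QuotientGroup.mk_out_eq_mul P 1
  refine ⟨fun q => q.out * (p : G)⁻¹, fun q => ?_, by simp [hp]⟩
  rw [QuotientGroup.mk_mul_of_mem _ (P.inv_mem p.2), QuotientGroup.out_eq']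

/- The finite set consists of the Schreier generators of `P`. They are taken for all of `G` and not
only for `closure S`, which is why `U` need not lie in `closure S`. -/
theorem exists_finite_wordBall_inter_subset (P : Subgroup G) [P.FiniteIndex] {S : Set G}
    (hS : S.Finite) :
    ∃ U : Set G, U.Finite ∧ U ⊆ P ∧ ∀ n, wordBall S n ∩ P ⊆ wordBall U n := by
  obtain ⟨τ, hτ, hτ_one⟩ := exists_section_map_one P
  let schreier (s : G) (q : G ⧸ P) : G := (τ (s • q))⁻¹ * (s * τ q)
  let U : Set G := Set.image2 schreier (wordBall S 1) Set.univ
  have schreier_mem (s : G) (q : G ⧸ P) : schreier s q ∈ P := by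
    refine QuotientGroup.eq.1 ?_
    rw [hτ, ← smul_eq_mul, ← MulAction.Quotient.smul_coe, hτ]
  have ball_mem (n : ℕ) (q : G ⧸ P) : ∀ g ∈ wordBall S n, schreier g q ∈ wordBall U n := by
    induction n with
    | zero =>
      rintro _ rfl
      simpa [schreier] using one_mem_wordBall U 0
    | succ n ih =>
      intro g hg
      rw [add_comm, wordBall_add] at hg ⊢
      obtain ⟨s, hs, g, hg, rfl⟩ := hg
      refine ⟨schreier s (g • q), subset_wordBall_one U ⟨s, hs, _, trivial, rfl⟩, _, ih g hg, ?_⟩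
      simp only [schreier, mul_smul]
      group
  refine ⟨U, (wordBall_finite hS 1).image2 _ Set.finite_univ, ?_, fun n g ⟨hg, hgP⟩ => ?_⟩
  · rintro _ ⟨s, -, q, -, rfl⟩
    exact schreier_mem s q
  · have smul_one : g • ((1 : G) : G ⧸ P) = (1 : G) := by
      rw [MulAction.Quotient.smul_coe, smul_eq_mul, mul_one]
      exact QuotientGroup.eq.2 (by simpa using hgP)
    simpa [schreier, smul_one, hτ_one] using ball_mem n (1 : G) g hg

theorem exists_normal_finiteIndex_le {H : Subgroup G} [H.Normal] {ι : Type*} [Finite ι]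
    (Q : ι → Subgroup G) (hHQ : ∀ i, (Q i).FiniteIndex → H ≤ Q i) :
    ∃ P : Subgroup G, P.Normal ∧ P.FiniteIndex ∧ H ≤ P ∧ ∀ i, (Q i).FiniteIndex → P ≤ Q i := by
  let R : Subgroup G := ⨅ i : {i // (Q i).FiniteIndex}, Q i
  have : R.FiniteIndex := Subgroup.finiteIndex_iInf fun i => i.2
  exact ⟨R.normalCore, inferInstance, inferInstance,
    Subgroup.normal_le_normalCore.2 (le_iInf fun i => hHQ i i.2),
    fun i hi => R.normalCore_le.trans (iInf_le_of_le ⟨i, hi⟩ le_rfl)⟩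

section ModuloNormal

variable {H : Subgroup G} [H.Normal]

theorem exists_lift_of_subset_sup {A : Subgroup G} {U : Set G}
    (hU : U ⊆ (A ⊔ H : Subgroup G)) : ∃ v : G → G, ∀ u ∈ U, v u ∈ A ∧ u / v u ∈ H := by
  have exists_lift : ∀ u ∈ U, ∃ v, v ∈ A ∧ u / v ∈ H := fun u hu => by
    obtain ⟨v, hv, h, hh, rfl⟩ := Subgroup.mem_sup_of_normal_right.1 (hU hu)
    exact ⟨v, hv, div_eq_mul_inv (v * h) v ▸ Subgroup.Normal.conj_mem ‹_› h hh v⟩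
  choose! v hv using exists_lift
  exact ⟨v, hv⟩

theorem exists_mem_wordBall_image_div_mem {U : Set G} {v : G → G} (hv : ∀ u ∈ U, u / v u ∈ H)
    {n : ℕ} {x : G} (hx : x ∈ wordBall U n) : ∃ y ∈ wordBall (v '' U) n, x / y ∈ H := by
  have image_eq : QuotientGroup.mk' H '' (v '' U) = QuotientGroup.mk' H '' U := by
    rw [Set.image_image]
    exact Set.image_congr fun u hu => (QuotientGroup.eq_iff_div_mem.2 (hv u hu)).symm
  have mk_mem : QuotientGroup.mk' H x ∈ QuotientGroup.mk' H '' wordBall (v '' U) n := by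
    rw [← wordBall_image, image_eq, wordBall_image]
    exact Set.mem_image_of_mem _ hx
  obtain ⟨y, hy, hyx⟩ := mk_mem
  exact ⟨y, hy, QuotientGroup.eq_iff_div_mem.1 hyx.symm⟩

end ModuloNormal

/-- Every `m ∈ P` in a ball of `V` can be moved past `w` and replaced by an element `m' ∈ P` in a
ball of `V'` of comparable radius, at cost `f` in `H`: `m * w = k * w * m'`. The subgroups between
which elements are transported are `closure V` and `closure V'`. -/
def Transports (P H : Subgroup G) (f : ℕ → ℕ) (V V' : Set G) (w : G) : Prop :=
  ∃ K : ℕ → Set G, HasCost H f K ∧ ∃ c, ∀ r, ∀ m ∈ wordBall V r ∩ P,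
    ∃ m' ∈ wordBall V' (c * (r + 1)) ∩ P, ∃ k ∈ K r, m * w = k * w * m'

section Transports

variable {P H : Subgroup G} {f : ℕ → ℕ} {V V' V'' : Set G}

theorem Transports.mul [H.Normal] (hf : Monotone f) {w w' : G} (hw : Transports P H f V V' w)
    (hw' : Transports P H f V' V'' w') : Transports P H f V V'' (w * w') := by
  obtain ⟨K, hK, c, hc⟩ := hw
  obtain ⟨K', hK', c', hc'⟩ := hw'
  refine ⟨_, hK.mul hf ((hK'.comp_affine hf c).conj w), c' * (c + 1), fun r m hm => ?_⟩
  obtain ⟨m', hm', k, hk, hkm⟩ := hc r m hm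
  obtain ⟨m'', ⟨hm'', hm''P⟩, k', hk', hkm'⟩ := hc' _ m' hm'
  have radius_le : c' * (c * (r + 1) + 1) ≤ c' * (c + 1) * (r + 1) := by
    rw [mul_assoc]
    gcongr
    linarith
  refine ⟨m'', ⟨wordBall_mono subset_rfl radius_le hm'', hm''P⟩, _,
    Set.mul_mem_mul hk (Set.mem_image_of_mem _ hk'), ?_⟩
  calc m * (w * w') = k * w * (m' * w') := by rw [← mul_assoc, hkm, mul_assoc]
    _ = k * MulAut.conj w k' * (w * w') * m'' := by
        rw [hkm', MulAut.conj_apply]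
        group

theorem transports_self [P.Normal] {b : G} (hb : b ∈ Subgroup.closure V) :
    Transports P H f V V b := by
  obtain ⟨c, hc⟩ := exists_mem_wordBall hb
  refine ⟨_, HasCost.singleton_one H f, 2 * c + 1, fun r m ⟨hm, hmP⟩ =>
    ⟨b⁻¹ * m * b, ⟨?_, Subgroup.Normal.conj_mem' ‹_› m hmP b⟩, 1, rfl, by group⟩⟩
  exact wordBall_mono subset_rfl (by nlinarith)
    (mul_mem_wordBall (mul_mem_wordBall (inv_mem_wordBall hc) hm) hc)

theorem transports_one_of_le_sup [H.Normal] [P.FiniteIndex] (hf : Monotone f) (hV : V.Finite)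
    (hcost : HasCost H f fun r => wordBall V r ∩ H) (hHP : H ≤ P)
    (hP : P ≤ (Subgroup.closure V ⊓ Subgroup.closure V') ⊔ H) : Transports P H f V V' 1 := by
  obtain ⟨U, hUfin, hUP, hU⟩ := exists_finite_wordBall_inter_subset P hV
  obtain ⟨v, hv⟩ := exists_lift_of_subset_sup (hUP.trans hP)
  obtain ⟨c, hc⟩ := exists_subset_wordBall (S := V) (hUfin.image v)
    (Set.image_subset_iff.2 fun u hu => (hv u hu).1.1)
  obtain ⟨c', hc'⟩ := exists_subset_wordBall (S := V') (hUfin.image v)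
    (Set.image_subset_iff.2 fun u hu => (hv u hu).1.2)
  refine ⟨_, hcost.comp_affine hf (c + 1), c', fun r m ⟨hm, hmP⟩ => ?_⟩
  obtain ⟨m', hm', hkH⟩ := exists_mem_wordBall_image_div_mem (fun u hu => (hv u hu).2)
    (hU r ⟨hm, hmP⟩)
  have hm'P : m' ∈ P :=
    (P.mul_mem_cancel_left (hHP hkH)).1 ((div_mul_cancel m m').symm ▸ hmP)
  have hk : m / m' ∈ wordBall V ((c + 1) * (r + 1)) :=
    wordBall_mono subset_rfl (by nlinarith)
      (div_mem_wordBall hm (wordBall_subset_wordBall_mul hc r hm'))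
  exact ⟨m', ⟨wordBall_mono subset_rfl (by gcongr; exact r.le_succ)
    (wordBall_subset_wordBall_mul hc' r hm'), hm'P⟩, m / m', ⟨hk, hkH⟩, by simp⟩

theorem Transports.hasCost_conj [H.Normal] (hf : Monotone f) (hpos : ∀ n, 0 < f n)
    (hcost : HasCost H f fun r => wordBall V r ∩ H) {h : G} (hh : h ∈ H)
    (hT : Transports P H f V V h) :
    HasCost H f fun r => (fun m => m * h * m⁻¹) '' (wordBall V r ∩ P) := by
  obtain ⟨K, hK, c, hc⟩ := hT
  refine ((hK.mul hf (.const hpos (Set.finite_singleton h) (Set.singleton_subset_iff.2 hh))).mul hf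
    (hcost.comp_affine hf (c + 1))).mono ?_
  rintro r _ ⟨m, hm, rfl⟩
  obtain ⟨m', ⟨hm', -⟩, k, hk, hkm⟩ := hc r m hm
  have conj_eq : m * h * m⁻¹ = k * h * (m' / m) := by rw [hkm, div_eq_mul_inv, mul_assoc]
  have hm'H : m' / m ∈ H :=
    (H.mul_mem_cancel_left (H.mul_mem (hK.subset r hk) hh)).1
      (conj_eq ▸ Subgroup.Normal.conj_mem ‹_› h hh m)
  have hm'V : m' / m ∈ wordBall V ((c + 1) * (r + 1)) :=
    wordBall_mono subset_rfl (by nlinarith) (div_mem_wordBall hm' hm.1)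
  exact ⟨_, Set.mul_mem_mul hk rfl, _, ⟨hm'V, hm'H⟩, conj_eq.symm⟩

end Transports

section Chains

variable {ι : Type*} {H : Subgroup G} {f : ℕ → ℕ}

/-- The image of `A ⊓ B` in the quotient by `H` has finite index. This is stated through the index
of the preimage `(A ⊓ B) ⊔ H`, which makes sense for every subgroup `H`. -/
def AdjacentModulo (H A B : Subgroup G) : Prop := ((A ⊓ B) ⊔ H).FiniteIndex

theorem adjacentModulo_iff_index_map_ne_zero [H.Normal] {A B : Subgroup G} :
    AdjacentModulo H A B ↔ ((A ⊓ B).map (QuotientGroup.mk' H)).index ≠ 0 := by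
  rw [AdjacentModulo, Subgroup.finiteIndex_iff, Subgroup.index_map, QuotientGroup.ker_mk',
    QuotientGroup.range_mk', Subgroup.index_top, mul_one]

theorem reflTransGen_of_fin_chain {α : Type*} {r : α → α → Prop} {n : ℕ} {c : Fin (n + 1) → α}
    (hc : ∀ j : Fin n, r (c j.castSucc) (c j.succ)) : ReflTransGen r (c 0) (c (Fin.last n)) := by
  have reaches (j : Fin (n + 1)) : ReflTransGen r (c 0) (c j) := by
    induction j using Fin.induction with
    | zero => exact .refl
    | succ j ih => exact ih.tail (hc j)
  exact reaches _

theorem finiteIndex_sup_of_reflTransGen {A : ι → Subgroup G} (hgen : ⨆ i, A i = ⊤) {i : ι}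
    (hconn : ∀ j, ReflTransGen (fun i j => AdjacentModulo H (A i) (A j)) i j) :
    (A i ⊔ H).FiniteIndex := by
  by_cases hi : ∀ j, j = i
  · have eq_top : A i = ⊤ := top_le_iff.1 (hgen ▸ iSup_le fun j => (hi j ▸ le_rfl))
    rw [eq_top, top_sup_eq]
    infer_instance
  · push Not at hi
    obtain ⟨j, hji⟩ := hi
    obtain rfl | ⟨k, hik, -⟩ := (hconn j).cases_head
    · exact absurd rfl hji
    · have : ((A i ⊓ A k) ⊔ H).FiniteIndex := hik
      exact Subgroup.finiteIndex_of_le (sup_le_sup_right (inf_le_left : A i ⊓ A k ≤ A i) H)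

theorem transports_one_of_reflTransGen {P : Subgroup G} [P.Normal] [P.FiniteIndex] [H.Normal]
    (hf : Monotone f) {V : ι → Set G} (hV : ∀ i, (V i).Finite)
    (hcost : ∀ i, HasCost H f fun r => wordBall (V i) r ∩ H) (hHP : H ≤ P)
    {i j : ι} (hij : ReflTransGen (fun i j =>
      P ≤ (Subgroup.closure (V i) ⊓ Subgroup.closure (V j)) ⊔ H) i j) :
    Transports P H f (V i) (V j) 1 := by
  induction hij with
  | refl => exact transports_self (one_mem _)
  | tail _ hjk ih =>
    exact mul_one (1 : G) ▸ ih.mul hf (transports_one_of_le_sup hf (hV _) (hcost _) hHP hjk)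

theorem transports_of_iSup_closure_eq_top {P : Subgroup G} [P.Normal] [H.Normal] (hf : Monotone f)
    {V : ι → Set G} (hgen : ⨆ i, Subgroup.closure (V i) = ⊤)
    (hone : ∀ i j, Transports P H f (V i) (V j) 1) (w : G) (i : ι) :
    Transports P H f (V i) (V i) w := by
  have hw : w ∈ ⨆ i, Subgroup.closure (V i) := hgen ▸ Subgroup.mem_top w
  refine Subgroup.iSup_induction (fun i => Subgroup.closure (V i))
    (C := Transports P H f (V i) (V i)) hw (fun j b hb => ?_) (hone i i)
    fun _ _ hw hw' => hw.mul hf hw'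
  simpa only [one_mul, mul_one] using ((hone i j).mul hf (transports_self hb)).mul hf (hone j i)

theorem wordBall_subset_conj_pow_mul {P : Subgroup G} {U V F : Set G} {c : ℕ}
    (hU : ∀ u ∈ wordBall U 1, ∃ v ∈ wordBall V c ∩ P, u / v ∈ F) {n N : ℕ} (hN : c * n ≤ N) :
    wordBall U n ⊆ (⋃ h ∈ F, (fun m => m * h * m⁻¹) '' (wordBall V N ∩ P)) ^ n *
      (wordBall V (c * n) ∩ P) := by
  induction n with
  | zero =>
    rintro _ rfl
    exact ⟨1, rfl, 1, ⟨one_mem_wordBall V _, P.one_mem⟩, mul_one 1⟩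
  | succ n ih =>
    have hn : c * n ≤ N := (Nat.mul_le_mul_left c n.le_succ).trans hN
    rw [wordBall_add]
    rintro _ ⟨x, hx, u, hu, rfl⟩
    obtain ⟨k, hk, m, hm, rfl⟩ := ih hn hx
    obtain ⟨v, hv, huv⟩ := hU u hu
    have conj_mem : m * (u / v) * m⁻¹ ∈
        ⋃ h ∈ F, (fun m => m * h * m⁻¹) '' (wordBall V N ∩ P) :=
      Set.mem_biUnion huv ⟨m, ⟨wordBall_mono subset_rfl hn hm.1, hm.2⟩, rfl⟩
    refine ⟨k * (m * (u / v) * m⁻¹), Set.mul_mem_mul hk conj_mem, m * v,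
      ⟨mul_mem_wordBall hm.1 hv.1, P.mul_mem hm.2 hv.2⟩, ?_⟩
    simp only [div_eq_mul_inv]
    group

theorem hasCost_wordBall_inter_of_transports {P : Subgroup G} [P.FiniteIndex] [H.Normal]
    (hf : Monotone f) (hpos : ∀ n, 0 < f n) {V : Set G}
    (hcost : HasCost H f fun r => wordBall V r ∩ H) (hHP : H ≤ P)
    (hP : P ≤ Subgroup.closure V ⊔ H) (hT : ∀ h ∈ H, Transports P H f V V h) {S : Set G}
    (hS : S.Finite) : HasCost H (fun n => n * f n) fun n => wordBall S n ∩ H := by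
  obtain ⟨U, hUfin, hUP, hU⟩ := exists_finite_wordBall_inter_subset P hS
  have hballP : wordBall U 1 ⊆ P := wordBall_subset_subgroup hUP 1
  have hball := wordBall_finite hUfin 1
  obtain ⟨v, hv⟩ := exists_lift_of_subset_sup (hballP.trans hP)
  have hvP : ∀ u ∈ wordBall U 1, v u ∈ P := fun u hu =>
    (P.mul_mem_cancel_left (hHP (hv u hu).2)).1 ((div_mul_cancel u (v u)).symm ▸ hballP hu)
  obtain ⟨c, hc⟩ := exists_subset_wordBall (S := V) (hball.image v)
    (Set.image_subset_iff.2 fun u hu => (hv u hu).1)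
  let F := (fun u => u / v u) '' wordBall U 1
  have hFH : F ⊆ H := Set.image_subset_iff.2 fun u hu => (hv u hu).2
  have hconj : HasCost H f fun n =>
      ⋃ h ∈ F, (fun m => m * h * m⁻¹) '' (wordBall V (c * (n + 1)) ∩ P) :=
    (HasCost.biUnion hf (hball.image _) fun h hh =>
      (hT h (hFH hh)).hasCost_conj hf hpos hcost (hFH hh)).comp_affine hf c
  refine (hconj.pow_mul hf (hcost.comp_affine hf c)).mono fun n g ⟨hg, hgH⟩ => ?_
  have hcn : c * n ≤ c * (n + 1) := Nat.mul_le_mul_left c n.le_succ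
  obtain ⟨k, hk, m, ⟨hm, -⟩, rfl⟩ := wordBall_subset_conj_pow_mul
    (fun u hu => ⟨v u, ⟨hc ⟨u, hu, rfl⟩, hvP u hu⟩, Set.mem_image_of_mem _ hu⟩) hcn
    (hU n ⟨hg, hHP hgH⟩)
  have hkH : k ∈ H := Subgroup.pow_subset (hconj.subset n) hk
  exact ⟨k, hk, m, ⟨wordBall_mono subset_rfl hcn hm, (H.mul_mem_cancel_left hkH).1 hgH⟩, rfl⟩

theorem hasCost_wordBall_inter [Finite ι] [H.Normal] (hf : Monotone f) (hpos : ∀ n, 0 < f n)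
    {V : ι → Set G} (hV : ∀ i, (V i).Finite) (hgen : ⨆ i, Subgroup.closure (V i) = ⊤)
    (hconn : ∀ i j, ReflTransGen (fun i j =>
      AdjacentModulo H (Subgroup.closure (V i)) (Subgroup.closure (V j))) i j)
    (hcost : ∀ i, HasCost H f fun r => wordBall (V i) r ∩ H) {S : Set G} (hS : S.Finite) :
    HasCost H (fun n => n * f n) fun n => wordBall S n ∩ H := by
  rcases isEmpty_or_nonempty ι with _ | ⟨⟨i₀⟩⟩
  · have eq_one (g : G) : g = 1 := by
      rw [← Subgroup.mem_bot, ← iSup_of_empty fun i => Subgroup.closure (V i), hgen]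
      exact Subgroup.mem_top g
    exact (HasCost.singleton_one H _).mono fun n g _ => eq_one g
  let A (i : ι) := Subgroup.closure (V i)
  obtain ⟨P, _, _, hHP, hP⟩ := exists_normal_finiteIndex_le
    (fun ij : ι × ι => (A ij.1 ⊓ A ij.2) ⊔ H) fun _ _ => le_sup_right
  have hone (i j : ι) : Transports P H f (V i) (V j) 1 :=
    transports_one_of_reflTransGen hf hV hcost hHP
      (ReflTransGen.mono (fun i j hij => hP (i, j) hij) i j (hconn i j))
  have hP₀ : P ≤ A i₀ ⊔ H := by
    have := finiteIndex_sup_of_reflTransGen hgen (hconn i₀)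
    simpa only [inf_idem] using hP (i₀, i₀) (by simpa only [inf_idem] using this)
  exact hasCost_wordBall_inter_of_transports hf hpos (hcost i₀) hHP hP₀
    (fun h _ => transports_of_iSup_closure_eq_top hf hgen hone h i₀) hS

end Chains

section FinsetFamily

/-- The largest of the distortions of the subgroups `A ⊓ H` in `A`, for `A` in a finite family
`𝒜`. -/
noncomputable def maxDistortion (𝒜 : Finset (Subgroup G)) (H : Subgroup G)
    (SA TA : Subgroup G → Set G) (n : ℕ) : ℕ :=
  𝒜.sup fun A => distortion (SA A) (TA A) (A ⊓ H) n

variable {𝒜 : Finset (Subgroup G)} {H : Subgroup G} {SA TA : Subgroup G → Set G}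

theorem maxDistortion_monotone
    (hSA : ∀ A ∈ 𝒜, (SA A).Finite ∧ Subgroup.closure (SA A) = A) :
    Monotone (maxDistortion 𝒜 H SA TA) := fun _ _ hmn =>
  Finset.sup_mono_fun fun A hA =>
    distortion_monotone (hSA A hA).1 (inf_le_left.trans (hSA A hA).2.ge) hmn

theorem hasCost_maxDistortion
    (hSA : ∀ A ∈ 𝒜, (SA A).Finite ∧ Subgroup.closure (SA A) = A)
    (hTA : ∀ A ∈ 𝒜, (TA A).Finite ∧ Subgroup.closure (TA A) = A ⊓ H) {A : Subgroup G}
    (hA : A ∈ 𝒜) :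
    HasCost H (fun n => maxDistortion 𝒜 H SA TA n + 1) fun r => wordBall (SA A) r ∩ H := by
  obtain ⟨hSfin, hSgen⟩ := hSA A hA
  obtain ⟨hTfin, hTgen⟩ := hTA A hA
  have hTH : TA A ⊆ H := (Subgroup.closure_le H).1 (hTgen.le.trans inf_le_right)
  refine ⟨TA A, hTfin, hTH, 1, fun r h ⟨hr, hH⟩ => ?_⟩
  have hAH : h ∈ A ⊓ H :=
    ⟨hSgen.le (wordBall_subset_subgroup Subgroup.subset_closure r hr), hH⟩
  have radius_le : distortion (SA A) (TA A) (A ⊓ H) r ≤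
      1 * (maxDistortion 𝒜 H SA TA (1 * (r + 1)) + 1) := by
    rw [one_mul, one_mul]
    calc distortion (SA A) (TA A) (A ⊓ H) r ≤ maxDistortion 𝒜 H SA TA r :=
          Finset.le_sup (f := fun A => distortion (SA A) (TA A) (A ⊓ H) r) hA
      _ ≤ maxDistortion 𝒜 H SA TA (r + 1) := maxDistortion_monotone hSA r.le_succ
      _ ≤ maxDistortion 𝒜 H SA TA (r + 1) + 1 := Nat.le_succ _
  exact wordBall_mono subset_rfl radius_le (wordBall_inter_subset_wordBall_distortion hSfin
    (inf_le_left.trans hSgen.ge) hTgen.ge r ⟨hr, hAH⟩)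

theorem iSup_subtype_eq_top (hgen : Subgroup.closure (⋃ A ∈ 𝒜, (A : Set G)) = ⊤) :
    ⨆ A : 𝒜, (A : Subgroup G) = ⊤ := by
  rw [← hgen, Subgroup.closure_iUnion, iSup_subtype]
  simp_rw [Subgroup.closure_iUnion, Subgroup.closure_eq]

theorem hasCost_wordBall_inter_of_chain [H.Normal]
    (hgen : Subgroup.closure (⋃ A ∈ 𝒜, (A : Set G)) = ⊤)
    (hchain : ∀ A ∈ 𝒜, ∀ A' ∈ 𝒜, ∃ (n : ℕ) (c : Fin (n + 1) → Subgroup G),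
      (∀ j, c j ∈ 𝒜) ∧ c 0 = A ∧ c (Fin.last n) = A' ∧
      ∀ j : Fin n,
        (Subgroup.map (QuotientGroup.mk' H) (c j.castSucc ⊓ c j.succ)).index ≠ 0)
    (hSA : ∀ A ∈ 𝒜, (SA A).Finite ∧ Subgroup.closure (SA A) = A)
    (hTA : ∀ A ∈ 𝒜, (TA A).Finite ∧ Subgroup.closure (TA A) = A ⊓ H) {S : Set G}
    (hS : S.Finite) :
    HasCost H (fun n => n * (maxDistortion 𝒜 H SA TA n + 1)) fun n => wordBall S n ∩ H := by
  have closure_SA (A : 𝒜) : Subgroup.closure (SA A) = A := (hSA A A.2).2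
  refine hasCost_wordBall_inter (V := fun A : 𝒜 => SA A) ?_ (fun _ => Nat.succ_pos _)
    (fun A => (hSA A A.2).1) ?_ ?_ (fun A => hasCost_maxDistortion hSA hTA A.2) hS
  · exact (maxDistortion_monotone hSA).add_const 1
  · simpa only [closure_SA] using iSup_subtype_eq_top hgen
  · rintro ⟨A, hA⟩ ⟨A', hA'⟩
    obtain ⟨n, c, hc, rfl, rfl, hindex⟩ := hchain A hA A' hA'
    simp only [closure_SA]
    exact reflTransGen_of_fin_chain (c := fun j => (⟨c j, hc j⟩ : 𝒜))
      fun j => adjacentModulo_iff_index_map_ne_zero.2 (hindex j)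

end FinsetFamily

end

theorem stmt1_general {G : Type*} [Group G] (H : Subgroup G) [H.Normal]
    (𝒜 : Finset (Subgroup G))
    (hgen : Subgroup.closure (⋃ A ∈ 𝒜, (A : Set G)) = ⊤)
    (hAfg : ∀ A ∈ 𝒜, Subgroup.FG A)
    (hAHfg : ∀ A ∈ 𝒜, Subgroup.FG (A ⊓ H))
    (hchain : ∀ A ∈ 𝒜, ∀ A' ∈ 𝒜, ∃ (n : ℕ) (c : Fin (n + 1) → Subgroup G),
      (∀ j, c j ∈ 𝒜) ∧ c 0 = A ∧ c (Fin.last n) = A' ∧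
      ∀ j : Fin n,
        (Subgroup.map (QuotientGroup.mk' H) (c j.castSucc ⊓ c j.succ)).index ≠ 0) :
    Subgroup.FG H ∧
    ∀ (S T : Set G) (SA TA : Subgroup G → Set G),
      S.Finite → H ≤ Subgroup.closure S → Subgroup.closure T = H →
      (∀ A ∈ 𝒜, (SA A).Finite ∧ Subgroup.closure (SA A) = A) →
      (∀ A ∈ 𝒜, (TA A).Finite ∧ Subgroup.closure (TA A) = A ⊓ H) →
      Dominated (distortion S T H)
        (fun n => n * 𝒜.sup fun A => distortion (SA A) (TA A) (A ⊓ H) n) := by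
  refine ⟨?_, fun S T SA TA hS hHS hT hSA hTA =>
    (hasCost_wordBall_inter_of_chain hgen hchain hSA hTA hS).dominated_distortion
      (maxDistortion_monotone hSA) hHS hT.ge⟩
  choose! SA hSA using hAfg
  choose! TA hTA using hAHfg
  have hS : (⋃ A ∈ 𝒜, (SA A : Set G)).Finite :=
    𝒜.finite_toSet.biUnion fun A _ => (SA A).finite_toSet
  have closure_eq_top : Subgroup.closure (⋃ A ∈ 𝒜, (SA A : Set G)) = ⊤ := by
    rw [← hgen, Subgroup.closure_iUnion, Subgroup.closure_iUnion]
    simp only [Subgroup.closure_iUnion, Subgroup.closure_eq]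
    exact biSup_congr hSA
  exact (hasCost_wordBall_inter_of_chain (SA := fun A => SA A) (TA := fun A => TA A) hgen hchain
    (fun A hA => ⟨(SA A).finite_toSet, hSA A hA⟩) (fun A hA => ⟨(TA A).finite_toSet, hTA A hA⟩)
    hS).fg (le_top.trans closure_eq_top.ge)

theorem stmt1 {G : Type*} [Group G] (H : Subgroup G) [H.Normal]
    (hGfg : Group.FG G) (𝒜 : Finset (Subgroup G))
    (hgen : Subgroup.closure (⋃ A ∈ 𝒜, (A : Set G)) = ⊤)
    (hAfg : ∀ A ∈ 𝒜, Subgroup.FG A)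
    (hAHfg : ∀ A ∈ 𝒜, Subgroup.FG (A ⊓ H))
    (hchain : ∀ A ∈ 𝒜, ∀ A' ∈ 𝒜, ∃ (n : ℕ) (c : Fin (n + 1) → Subgroup G),
      (∀ j, c j ∈ 𝒜) ∧ c 0 = A ∧ c (Fin.last n) = A' ∧
      ∀ j : Fin n,
        (Subgroup.map (QuotientGroup.mk' H) (c j.castSucc ⊓ c j.succ)).index ≠ 0) :
    Subgroup.FG H ∧
    ∀ (S T : Set G) (SA TA : Subgroup G → Set G),
      S.Finite → Subgroup.closure S = ⊤ →
      T.Finite → T ⊆ (H : Set G) → Subgroup.closure T = H →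
      (∀ A ∈ 𝒜, (SA A).Finite ∧ SA A ⊆ (A : Set G) ∧ Subgroup.closure (SA A) = A) →
      (∀ A ∈ 𝒜, (TA A).Finite ∧ TA A ⊆ ((A ⊓ H : Subgroup G) : Set G) ∧
        Subgroup.closure (TA A) = A ⊓ H) →
      Dominated (distortion S T H)
        (fun n => n * 𝒜.sup fun A => distortion (SA A) (TA A) (A ⊓ H) n) := by
  have general := stmt1_general H 𝒜 hgen hAfg hAHfg hchain
  exact ⟨general.1, fun S T SA TA hS hSgen _ _ hT hSA hTA => general.2 S T SA TA hS
    (le_top.trans hSgen.ge) hT (fun A hA => ⟨(hSA A hA).1, (hSA A hA).2.2⟩)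
    fun A hA => ⟨(hTA A hA).1, (hTA A hA).2.2⟩⟩
end

section
/- Let Γ be a finite simplicial graph and let H_Φ be a generalized Bestvina–Brady subgroup of A_Γ. Then H_Φ is finitely generated if and only if each basis subgraph of Γ with respect to Φ is connected and dominating. -/
/-- The defining relators of the right-angled Artin group of a graph `Γ`. -/
def raagRels {V : Type*} (Γ : SimpleGraph V) : Set (FreeGroup V) :=
  {r | ∃ u v : V, Γ.Adj u v ∧
    r = FreeGroup.of u * FreeGroup.of v * (FreeGroup.of u)⁻¹ * (FreeGroup.of v)⁻¹}

/-- The right-angled Artin group of a graph `Γ`. -/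
abbrev RAAG {V : Type*} (Γ : SimpleGraph V) : Type _ := PresentedGroup (raagRels Γ)

/-- The standard generator of `RAAG Γ` associated to a vertex. -/
def raagGen {V : Type*} (Γ : SimpleGraph V) (v : V) : RAAG Γ := PresentedGroup.of v

/-!
If every `Γᵢ` is connected and dominating, the part of the Cayley graph of `A_Γ` lying over the box
`{-1, 0, 1}ᵈ ⊆ ℤᵈ` connects all of `H_Φ`; as the box is finite, a Schreier-type argument then shows
that `H_Φ` is finitely generated. Connectedness is obtained one coordinate at a time: a path is
pushed into the hyperplane `xᵢ = 0` by multiplying each of its vertices by a power of some `u ∈ Γᵢ`.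
Domination lets one choose, for each letter of the path, a `u` commuting with it, and connectedness
of `Γᵢ` lets one pass between different choices of `u` without leaving the slab `|xᵢ| ≤ 1`.

Conversely, if `Γᵢ` is disconnected or not dominating, then `A_Γ` maps to the lamplighter group with
`H_Φ` going into its base, an elementary abelian 2-group. The image of `H_Φ` contains infinitely
many commutators, whereas a finitely generated subgroup of the base is finite.
-/

section Lamplighter

open RegularWreathProduct
open scoped commutatorElement

section RegularWreathProduct

variable {D Q : Type*} [Group Q]

theorem finite_of_fg_of_le_ker_rightHom [CommGroup D] [Finite D] {M : Subgroup (D ≀ᵣ Q)}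
    (hfg : M.FG) (hM : M ≤ rightHom.ker) : Finite M := by
  have right_eq_one (g : M) : (g : D ≀ᵣ Q).right = 1 := hM g.2
  have left_pow (g : M) (n : ℕ) : (g ^ n : D ≀ᵣ Q).left = (g : D ≀ᵣ Q).left ^ n := by
    induction n with
    | zero => simp
    | succ n ih => ext x; simp [pow_succ', ih, right_eq_one g]
  have right_pow (g : M) (n : ℕ) : (g ^ n : D ≀ᵣ Q).right = 1 := right_eq_one (g ^ n)
  let _ : CommGroup M :=
    { (inferInstance : Group M) with
      mul_comm := fun g h => by ext <;> simp [right_eq_one, mul_comm] }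
  have : Group.FG M := (Group.fg_iff_subgroup_fg M).2 hfg
  refine CommGroup.finite_of_fg_isMulTorsion M fun g =>
    isOfFinOrder_iff_pow_eq_one.2 ⟨Nat.card D, Nat.card_pos, ?_⟩
  ext <;> simp [left_pow, right_pow]

variable [Group D] [DecidableEq Q]

/-- The element of the regular wreath product with trivial `Q`-component and value `d` in the
coordinate `1`; for the lamplighter group, it switches the lamp at the origin. -/
def lamp (d : D) : D ≀ᵣ Q := ⟨Pi.mulSingle 1 d, 1⟩

theorem commutatorElement_inl_lamp_injective {d : D} (hd : d ≠ 1) :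
    Function.Injective fun q : Q => ⁅(inl q : D ≀ᵣ Q), (lamp d : D ≀ᵣ Q)⁆ := by
  intro p q hpq
  have hconj : (inl p * lamp d * (inl p)⁻¹ : D ≀ᵣ Q) = inl q * lamp d * (inl q)⁻¹ :=
    mul_right_cancel hpq
  have hleft := congr_fun (congr_arg left hconj) p
  simp only [mul_left, left_inl, right_inl, inv_left, mul_right, lamp, one_mul, mul_one,
    Pi.mul_apply, Pi.inv_apply, Pi.one_apply, inv_one, inv_mul_cancel,
    Pi.mulSingle_eq_same] at hleft
  by_contra hne
  have : q⁻¹ * p ≠ 1 := fun h => hne (inv_mul_eq_one.1 h).symm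
  exact hd (by rw [hleft, Pi.mulSingle_eq_of_ne this])

end RegularWreathProduct

theorem not_fg_of_map_to_regularWreathProduct {G D Q : Type*} [Group G] [CommGroup D] [Finite D]
    [Group Q] [Infinite Q] [DecidableEq Q] {N : Subgroup G} (hcomm : commutator G ≤ N)
    {f : G →* D ≀ᵣ Q} (hN : N ≤ (rightHom.comp f).ker) (hinl : inl.range ≤ f.range)
    {d : D} (hd : d ≠ 1) (hlamp : lamp d ∈ f.range) : ¬ N.FG := by
  intro hfg
  have : Finite (N.map f) := by
    have hfg' : (N.map f).FG := (Group.fg_iff_subgroup_fg _).1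
      (@Group.fg_of_surjective _ _ _ _ ((Group.fg_iff_subgroup_fg N).2 hfg) _
        (f.subgroupMap_surjective N))
    refine finite_of_fg_of_le_ker_rightHom hfg' ?_
    rwa [Subgroup.map_le_iff_le_comap, MonoidHom.comap_ker]
  have commutator_mem (q : Q) : ⁅(inl q : D ≀ᵣ Q), (lamp d : D ≀ᵣ Q)⁆ ∈ N.map f := by
    obtain ⟨x, hx⟩ := hinl ⟨q, rfl⟩
    obtain ⟨y, hy⟩ := hlamp
    rw [← hx, ← hy, ← map_commutatorElement]
    exact Subgroup.mem_map_of_mem f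
      (hcomm (Subgroup.commutator_mem_commutator (Subgroup.mem_top x) (Subgroup.mem_top y)))
  exact not_injective_infinite_finite (fun q : Q => (⟨_, commutator_mem q⟩ : N.map f))
    fun p q hpq => commutatorElement_inl_lamp_injective hd (congr_arg Subtype.val hpq)

end Lamplighter

section RAAG

variable {V : Type*} {Γ : SimpleGraph V}

theorem commute_raagGen {u v : V} (h : Γ.Adj u v) : Commute (raagGen Γ u) (raagGen Γ v) :=
  commutatorElement_eq_one_iff_commute.1
    (PresentedGroup.one_of_mem (rels := raagRels Γ) ⟨u, v, h, rfl⟩)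

theorem exists_raag_lift {H : Type*} [Group H] {F : V → H}
    (hF : ∀ u v, Γ.Adj u v → Commute (F u) (F v)) :
    ∃ f : RAAG Γ →* H, ∀ v, f (raagGen Γ v) = F v := by
  refine ⟨PresentedGroup.toGroup (f := F) ?_, fun v => PresentedGroup.toGroup.of _⟩
  rintro r ⟨u, v, h, rfl⟩
  simpa [commutatorElement_def] using commutatorElement_eq_one_iff_commute.2 (hF u v h)

end RAAG

section NotFG

open RegularWreathProduct

/-- The lamplighter group `(ℤ/2) ≀ ℤ`, with unrestricted base `ℤ → ℤˣ`. -/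
abbrev Lamplighter : Type := ℤˣ ≀ᵣ Multiplicative ℤ

/-- The generator of the cyclic group `ℤ` of translations in the lamplighter group. -/
def shift : Lamplighter := inl (Multiplicative.ofAdd 1)

variable {V : Type*} {Γ : SimpleGraph V} {N : Subgroup (RAAG Γ)} {χ : RAAG Γ →* Multiplicative ℤ}
  {S : Set V}

theorem not_fg_of_lamplighter_labeling (hcomm : commutator (RAAG Γ) ≤ N) (hN : N ≤ χ.ker)
    {F : V → Lamplighter} (hF : ∀ u v, Γ.Adj u v → Commute (F u) (F v))
    (hright : ∀ v, (F v).right = χ (raagGen Γ v))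
    (hshift : shift ∈ Subgroup.closure (Set.range F))
    (hlamp : lamp (-1) ∈ Subgroup.closure (Set.range F)) : ¬ N.FG := by
  obtain ⟨f, hf⟩ := exists_raag_lift hF
  have hχ : rightHom.comp f = χ := PresentedGroup.ext fun v => by
    rw [← raagGen, ← hright, ← hf]; rfl
  have hrange : Subgroup.closure (Set.range F) ≤ f.range := by
    rw [Subgroup.closure_le]
    rintro _ ⟨v, rfl⟩
    exact ⟨_, hf v⟩
  refine not_fg_of_map_to_regularWreathProduct hcomm (hχ ▸ hN) ?_ (by decide) (hrange hlamp)
  rintro _ ⟨n, rfl⟩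
  have hn : inl n = shift ^ n.toAdd := by
    rw [shift, ← map_zpow, ← ofAdd_zsmul, smul_eq_mul, mul_one, ofAdd_toAdd]
  exact hn ▸ zpow_mem (hrange hshift) _

theorem preconnected_induce_of_fg (hcomm : commutator (RAAG Γ) ≤ N) (hN : N ≤ χ.ker)
    (hχ : ∀ v ∈ S, χ (raagGen Γ v) = Multiplicative.ofAdd 1)
    (hχ' : ∀ v ∉ S, χ (raagGen Γ v) = 1) (hfg : N.FG) : (Γ.induce S).Preconnected := by
  classical
  rintro a b
  by_contra hab
  let A : Set V := {v | ∃ hv : v ∈ S, (Γ.induce S).Reachable a ⟨v, hv⟩}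
  have hA {u v : V} (huv : Γ.Adj u v) (hu : u ∈ S) (hv : v ∈ S) : u ∈ A ↔ v ∈ A :=
    have hadj : (Γ.induce S).Adj ⟨u, hu⟩ ⟨v, hv⟩ := huv
    ⟨fun ⟨_, h⟩ => ⟨hv, h.trans hadj.reachable⟩, fun ⟨_, h⟩ => ⟨hu, h.trans hadj.symm.reachable⟩⟩
  let F (v : V) : Lamplighter := if v ∈ S then (if v ∈ A then shift else lamp (-1) * shift) else 1
  have hFa : F a = shift := by
    have : a.1 ∈ A := ⟨a.2, .refl _⟩
    simp [F, this]
  have hFb : F b = lamp (-1) * shift := by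
    have : b.1 ∉ A := fun ⟨_, h⟩ => hab h
    simp [F, this]
  have hshift : shift ∈ Subgroup.closure (Set.range F) :=
    hFa ▸ Subgroup.subset_closure ⟨a, rfl⟩
  refine not_fg_of_lamplighter_labeling hcomm hN (F := F) (fun u v huv => ?_) (fun v => ?_) hshift
    ?_ hfg
  · by_cases hu : u ∈ S
    · by_cases hv : v ∈ S
      · have : F u = F v := by simp only [F, hu, hv, hA huv hu hv]
        exact this ▸ Commute.refl _
      · simp [F, hv]
    · simp [F, hu]
  · by_cases hv : v ∈ S
    · rw [hχ v hv]
      by_cases hvA : v ∈ A <;> simp [F, hv, hvA, shift, lamp]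
    · simp [F, hv, hχ' v hv]
  · rw [← mul_inv_cancel_right (lamp (-1)) shift, ← hFb]
    exact mul_mem (Subgroup.subset_closure ⟨b, rfl⟩) (inv_mem hshift)

/-- A set of vertices is dominating if every vertex outside it has a neighbour in it. -/
def IsDominating (Γ : SimpleGraph V) (S : Set V) : Prop := ∀ v ∉ S, ∃ u ∈ S, Γ.Adj v u

theorem isDominating_of_fg (hcomm : commutator (RAAG Γ) ≤ N) (hN : N ≤ χ.ker)
    (hχ : ∀ v ∈ S, χ (raagGen Γ v) = Multiplicative.ofAdd 1)
    (hχ' : ∀ v ∉ S, χ (raagGen Γ v) = 1) (hS : S.Nonempty) (hfg : N.FG) : IsDominating Γ S := by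
  classical
  intro w hw
  by_contra! hwS
  obtain ⟨a, ha⟩ := hS
  let F (v : V) : Lamplighter := if v ∈ S then shift else if v = w then lamp (-1) else 1
  have hFa : F a = shift := if_pos ha
  have hFw : F w = lamp (-1) := by simp [F, hw]
  refine not_fg_of_lamplighter_labeling hcomm hN (F := F) (fun u v huv => ?_) (fun v => ?_)
    (hFa ▸ Subgroup.subset_closure ⟨a, rfl⟩) (hFw ▸ Subgroup.subset_closure ⟨w, rfl⟩) hfg
  · by_cases hu : u ∈ S <;> by_cases hv : v ∈ S
    · simp [F, hu, hv]
    · have : v ≠ w := fun h => hwS u hu (h ▸ huv.symm)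
      simp [F, hv, this]
    · have : u ≠ w := fun h => hwS v hv (h ▸ huv)
      simp [F, hu, this]
    · by_cases huw : u = w <;> by_cases hvw : v = w <;> simp [F, hu, hv, huw, hvw]
  · by_cases hv : v ∈ S
    · simp [F, hv, hχ v hv, shift]
    · rw [hχ' v hv]
      by_cases hvw : v = w
      · rw [hvw, hFw, lamp]
      · simp [F, hv, hvw]

end NotFG

section Cayley

open scoped Pointwise

variable {G V : Type*} [Group G]

/-- The partition into connected components of the part of the Cayley graph of `G` with respect to
`s` that lies in `R`; elements outside `R` form singleton classes. -/
def cayleySetoid (s : V → G) (R : Set G) : Setoid G :=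
  Relation.EqvGen.setoid fun p q => p ∈ R ∧ q ∈ R ∧ ∃ v, q = p * s v

variable {s : V → G} {R : Set G}

theorem cayleySetoid_mul {p : G} {v : V} (hp : p ∈ R) (hq : p * s v ∈ R) :
    cayleySetoid s R p (p * s v) :=
  Relation.EqvGen.rel _ _ ⟨hp, hq, v, rfl⟩

theorem cayleySetoid_le {r : Setoid G} (h : ∀ p v, p ∈ R → p * s v ∈ R → r p (p * s v)) :
    cayleySetoid s R ≤ r :=
  Setoid.eqvGen_le fun p _ ⟨hp, hq, v, hv⟩ => hv ▸ h p v hp (hv ▸ hq)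

theorem cayleySetoid_univ (hs : Subgroup.closure (Set.range s) = ⊤) (g : G) :
    cayleySetoid s Set.univ 1 g := by
  induction (hs ▸ Subgroup.mem_top g : g ∈ Subgroup.closure (Set.range s))
    using Subgroup.closure_induction_right with
  | one => exact Setoid.refl' _ _
  | mul_right p _ _ hv ih =>
    obtain ⟨v, rfl⟩ := hv
    exact Setoid.trans' _ ih (cayleySetoid_mul trivial trivial)
  | mul_inv_cancel p _ _ hv ih =>
    obtain ⟨v, rfl⟩ := hv
    have hstep : cayleySetoid s Set.univ (p * (s v)⁻¹) (p * (s v)⁻¹ * s v) :=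
      cayleySetoid_mul trivial trivial
    rw [inv_mul_cancel_right] at hstep
    exact Setoid.trans' _ ih (Setoid.symm' _ hstep)

theorem fg_ker_of_cayleySetoid [Finite V] {A : Type*} [Group A] {Φ : G →* A} {B : Set A}
    (hB : B.Finite) (h : ∀ g ∈ Φ.ker, cayleySetoid s (Φ ⁻¹' B) 1 g) : Φ.ker.FG := by
  let σ : A → G := Function.invFun Φ
  have hσ (g : G) : Φ (σ (Φ g)) = Φ g := Function.invFun_eq ⟨g, rfl⟩
  let T : Set G := (σ '' B * Set.range s * (σ '' B)⁻¹) ∩ Φ.ker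
  have hT : T.Finite :=
    (((hB.image σ).mul (Set.finite_range s)).mul (hB.image σ).inv).subset Set.inter_subset_left
  -- `p ↦ p * (σ (Φ p))⁻¹` takes values in the kernel and sends the edges of the Cayley graph over
  -- `B` to pairs that differ by an element of the finite set `T`.
  have hle : cayleySetoid s (Φ ⁻¹' B) ≤
      (QuotientGroup.leftRel (Subgroup.closure T)).comap fun p => p * (σ (Φ p))⁻¹ := by
    refine cayleySetoid_le fun p v hp hq => ?_
    rw [Setoid.comap_rel, QuotientGroup.leftRel_apply]
    have hedge : (p * (σ (Φ p))⁻¹)⁻¹ * (p * s v * (σ (Φ (p * s v)))⁻¹) =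
        σ (Φ p) * s v * (σ (Φ (p * s v)))⁻¹ := by group
    rw [hedge]
    refine Subgroup.subset_closure ⟨Set.mul_mem_mul (Set.mul_mem_mul ⟨_, hp, rfl⟩ ⟨v, rfl⟩)
      (Set.inv_mem_inv.2 ⟨_, hq, rfl⟩), ?_⟩
    simp only [SetLike.mem_coe, MonoidHom.mem_ker, map_mul Φ (_ * _) _⁻¹, map_inv, hσ,
      map_mul Φ (σ _), ← map_mul Φ p, mul_inv_cancel]
  have hσ1 : σ 1 ∈ Φ.ker := by simpa using hσ 1
  refine (Subgroup.fg_iff _).2 ⟨T, le_antisymm ?_ fun g hg => ?_, hT⟩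
  · exact (Subgroup.closure_le _).2 Set.inter_subset_right
  · have hconj : (σ 1)⁻¹ * g * σ 1 ∈ Φ.ker := mul_mem (mul_mem (inv_mem hσ1) hg) hσ1
    have := hle (h _ hconj)
    rw [Setoid.comap_rel, QuotientGroup.leftRel_apply, MonoidHom.mem_ker.1 hconj, map_one] at this
    simpa [mul_assoc] using this

end Cayley

section Box

variable {G V ι : Type*} [Group G]

/-- The `i`-th coordinate of `Φ g ∈ ℤ^ι`, as an integer. -/
def exponent (Φ : G →* (ι → Multiplicative ℤ)) (i : ι) (g : G) : ℤ := (Φ g i).toAdd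

/-- The elements of `G` whose coordinates with index in `T` lie in `{-1, 0, 1}`. -/
def box (Φ : G →* (ι → Multiplicative ℤ)) (T : Set ι) : Set G :=
  {g | ∀ j ∈ T, |exponent Φ j g| ≤ 1}

/-- The translate of `g` by the power of `s u` that makes the coordinate of index `lab u` zero. -/
def flatten (Φ : G →* (ι → Multiplicative ℤ)) (s : V → G) (lab : V → ι) (u : V) (g : G) : G :=
  g * s u ^ (-exponent Φ (lab u) g)

section Exponent

variable (Φ : G →* (ι → Multiplicative ℤ)) (i : ι)

@[simp]
theorem exponent_one : exponent Φ i 1 = 0 := by simp [exponent]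

@[simp]
theorem exponent_mul (g h : G) : exponent Φ i (g * h) = exponent Φ i g + exponent Φ i h := by
  simp [exponent]

@[simp]
theorem exponent_zpow (g : G) (n : ℤ) : exponent Φ i (g ^ n) = n * exponent Φ i g := by
  simp [exponent]

end Exponent

variable {Φ : G →* (ι → Multiplicative ℤ)} {s : V → G} {lab : V → ι}

theorem exponent_eq_zero_of_mem_ker {g : G} (hg : g ∈ Φ.ker) (i : ι) : exponent Φ i g = 0 := by
  simp [exponent, MonoidHom.mem_ker.1 hg]

theorem box_empty : box Φ ∅ = Set.univ := by simp [box]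

theorem exists_finite_box_univ_eq_preimage [Finite ι] :
    ∃ B : Set (ι → Multiplicative ℤ), B.Finite ∧ box Φ Set.univ = Φ ⁻¹' B := by
  refine ⟨{x | ∀ j, x j ∈ Multiplicative.toAdd ⁻¹' Set.Icc (-1) 1}, Set.Finite.pi' fun _ =>
    (Set.finite_Icc (-1 : ℤ) 1).preimage Multiplicative.toAdd.injective.injOn, ?_⟩
  ext g
  simp [box, exponent, abs_le]

theorem mem_box_congr {T : Set ι} {p q : G} (h : Φ p = Φ q) : p ∈ box Φ T ↔ q ∈ box Φ T := by
  simp [box, exponent, h]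

theorem flatten_eq_flatten_mul_zpow {u v : V} (huv : lab u = lab v) (hcomm : Commute (s u) (s v))
    (g : G) : flatten Φ s lab v g =
      flatten Φ s lab u g * (s u * (s v)⁻¹) ^ exponent Φ (lab u) g := by
  rw [flatten, flatten, ← huv, hcomm.inv_right.mul_zpow]
  group

variable [DecidableEq ι] (hΦ : ∀ v, Φ (s v) = Pi.mulSingle (lab v) (Multiplicative.ofAdd 1))
include hΦ

theorem exponent_generator (i : ι) (v : V) :
    exponent Φ i (s v) = if i = lab v then 1 else 0 := by
  rw [exponent, hΦ, Pi.mulSingle_apply]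
  split_ifs <;> rfl

theorem exponent_flatten_self (u : V) (g : G) :
    exponent Φ (lab u) (flatten Φ s lab u g) = 0 := by
  simp only [flatten, exponent_mul, exponent_zpow, exponent_generator hΦ, if_true]
  ring

theorem exponent_flatten_of_ne {j : ι} {u : V} (hj : j ≠ lab u) (g : G) :
    exponent Φ j (flatten Φ s lab u g) = exponent Φ j g := by
  simp only [flatten, exponent_mul, exponent_zpow, exponent_generator hΦ, if_neg hj]
  ring

theorem flatten_mem_box {T : Set ι} {g : G} (hg : g ∈ box Φ T) {u : V} {i : ι}
    (hu : lab u = i) : flatten Φ s lab u g ∈ box Φ (insert i T) := by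
  subst hu
  intro j hj
  by_cases hju : j = lab u
  · simp [hju, exponent_flatten_self hΦ]
  · rw [exponent_flatten_of_ne hΦ hju]
    exact hg j (hj.resolve_left hju)

theorem flatten_mul_self (u : V) (g : G) :
    flatten Φ s lab u (g * s u) = flatten Φ s lab u g := by
  simp only [flatten, exponent_mul, exponent_generator hΦ, if_true]
  group

theorem flatten_mul_of_commute {u v : V} (huv : lab v ≠ lab u) (hcomm : Commute (s v) (s u))
    (g : G) : flatten Φ s lab u (g * s v) = flatten Φ s lab u g * s v := by
  simp only [flatten, exponent_mul, exponent_generator hΦ, if_neg huv.symm, add_zero]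
  rw [mul_assoc, mul_assoc, (hcomm.zpow_right _).eq]

variable {Γ : SimpleGraph V} {T : Set ι}

theorem cayleySetoid_mul_zpow {u v : V} (huv : lab u = lab v) {p : G} (hp : p ∈ box Φ T)
    (hpu : exponent Φ (lab u) p = 0) (m : ℤ) :
    cayleySetoid s (box Φ T) p (p * (s u * (s v)⁻¹) ^ m) := by
  have hker : Φ (s u * (s v)⁻¹) = 1 := by rw [map_mul, map_inv, hΦ, hΦ, huv, mul_inv_cancel]
  have hΦpow (m : ℤ) : Φ (p * (s u * (s v)⁻¹) ^ m) = Φ p := by simp [hker]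
  have hstep (q : G) (hq : Φ q = Φ p) :
      cayleySetoid s (box Φ T) q (q * (s u * (s v)⁻¹)) := by
    have hqT : q ∈ box Φ T := (mem_box_congr hq).2 hp
    have hend : q * (s u * (s v)⁻¹) ∈ box Φ T := (mem_box_congr (by simp [hker])).2 hqT
    have hmid : q * s u ∈ box Φ T := by
      intro j hj
      rw [exponent_mul, exponent_generator hΦ]
      split_ifs with hju
      · simp [hju, exponent, hq, show (Φ p (lab u)).toAdd = 0 from hpu]
      · simpa using hqT j hj
    have hback : q * (s u * (s v)⁻¹) * s v = q * s u := by group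
    have := cayleySetoid_mul (s := s) hend (hback ▸ hmid)
    rw [hback] at this
    exact Setoid.trans' _ (cayleySetoid_mul hqT hmid) (Setoid.symm' _ this)
  induction m using Int.induction_on with
  | zero => simp
  | succ m ih =>
    rw [zpow_add_one, ← mul_assoc p]
    exact Setoid.trans' _ ih (hstep _ (hΦpow _))
  | pred m ih =>
    have := hstep _ (hΦpow (-m - 1))
    rw [mul_assoc p, ← zpow_add_one, sub_add_cancel] at this
    exact Setoid.trans' _ ih (Setoid.symm' _ this)

variable (hcomm : ∀ u v, Γ.Adj u v → Commute (s u) (s v))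
include hcomm

theorem cayleySetoid_flatten_of_preconnected {i : ι}
    (hconn : (Γ.induce {v | lab v = i}).Preconnected) {g : G} (hg : g ∈ box Φ T) {u v : V}
    (hu : lab u = i) (hv : lab v = i) :
    cayleySetoid s (box Φ (insert i T)) (flatten Φ s lab u g) (flatten Φ s lab v g) := by
  suffices h : ∀ a b : {v | lab v = i}, (Γ.induce {v | lab v = i}).Reachable a b →
      cayleySetoid s (box Φ (insert i T)) (flatten Φ s lab a g) (flatten Φ s lab b g) from
    h ⟨u, hu⟩ ⟨v, hv⟩ (hconn _ _)
  rintro a b ⟨w⟩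
  induction w with
  | nil => exact Setoid.refl' _ _
  | @cons a b _ hab _ ih =>
    have hlab : lab a = lab b := a.2.trans b.2.symm
    refine Setoid.trans' _ ?_ ih
    rw [flatten_eq_flatten_mul_zpow hlab (hcomm _ _ hab)]
    exact cayleySetoid_mul_zpow hΦ hlab (flatten_mem_box hΦ hg a.2) (exponent_flatten_self hΦ _ _) _

theorem cayleySetoid_le_comap_flatten {i : ι}
    (hconn : (Γ.induce {v | lab v = i}).Preconnected) (hdom : IsDominating Γ {v | lab v = i})
    {u : V} (hu : lab u = i) :
    cayleySetoid s (box Φ T) ≤ (cayleySetoid s (box Φ (insert i T))).comap (flatten Φ s lab u) := by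
  refine cayleySetoid_le fun p v hp hq => (Setoid.comap_rel ..).2 ?_
  obtain ⟨w, hw, hstep⟩ : ∃ w, lab w = i ∧ cayleySetoid s (box Φ (insert i T))
      (flatten Φ s lab w p) (flatten Φ s lab w (p * s v)) := by
    by_cases hv : lab v = i
    · exact ⟨v, hv, by rw [flatten_mul_self hΦ]⟩
    · obtain ⟨w, hw : lab w = i, hvw⟩ := hdom v hv
      have hflat := flatten_mul_of_commute hΦ (hw ▸ hv) (hcomm _ _ hvw) p
      exact ⟨w, hw, hflat ▸ cayleySetoid_mul (flatten_mem_box hΦ hp hw)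
        (hflat ▸ flatten_mem_box hΦ hq hw)⟩
  have hmove {g : G} (hg : g ∈ box Φ T) :
      cayleySetoid s (box Φ (insert i T)) (flatten Φ s lab u g) (flatten Φ s lab w g) :=
    cayleySetoid_flatten_of_preconnected hΦ hcomm hconn hg hu hw
  exact Setoid.trans' _ (hmove hp) (Setoid.trans' _ hstep (Setoid.symm' _ (hmove hq)))

theorem cayleySetoid_box_of_connected_of_isDominating
    (hs : Subgroup.closure (Set.range s) = ⊤)
    (hconn : ∀ i, (Γ.induce {v | lab v = i}).Connected)
    (hdom : ∀ i, IsDominating Γ {v | lab v = i}) (hT : T.Finite) {g : G}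
    (hg : ∀ j ∈ T, exponent Φ j g = 0) : cayleySetoid s (box Φ T) 1 g := by
  induction T, hT using Set.Finite.induction_on with
  | empty => exact box_empty (Φ := Φ) ▸ cayleySetoid_univ hs g
  | @insert i T _ _ ih =>
    obtain ⟨u, hu : lab u = i⟩ := (hconn i).nonempty
    have := cayleySetoid_le_comap_flatten hΦ hcomm (hconn i).preconnected (hdom i) hu
      (ih fun j hj => hg j (Set.mem_insert_of_mem _ hj))
    simpa [Setoid.comap_rel, flatten, hu, hg i (Set.mem_insert i T)] using this

theorem fg_ker_of_connected_of_isDominating [Finite V] [Finite ι]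
    (hs : Subgroup.closure (Set.range s) = ⊤)
    (hconn : ∀ i, (Γ.induce {v | lab v = i}).Connected)
    (hdom : ∀ i, IsDominating Γ {v | lab v = i}) : Φ.ker.FG := by
  obtain ⟨B, hB, hbox⟩ := exists_finite_box_univ_eq_preimage (Φ := Φ)
  refine fg_ker_of_cayleySetoid (s := s) hB fun g hg => hbox ▸ ?_
  exact cayleySetoid_box_of_connected_of_isDominating hΦ hcomm hs hconn hdom Set.finite_univ
    fun j _ => exponent_eq_zero_of_mem_ker hg j

end Box

/-- A generalized Bestvina–Brady subgroup `H_Φ = ker Φ` is finitely generated iff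
every basis subgraph `Γᵢ` is connected and dominating. Here the vertices of `Γ` are
labeled by `lab : V → Fin d` (surjectively), `Φ : A_Γ → ℤ^d` sends a vertex with
label `i` to the basis vector `e_i`, and `Γᵢ` is the induced subgraph on the
vertices with label `i`. -/
theorem stmt14 {V : Type*} [Fintype V] (Γ : SimpleGraph V) (d : ℕ)
    (lab : V → Fin d) (hlab : Function.Surjective lab)
    (Φ : RAAG Γ →* (Fin d → Multiplicative ℤ))
    (hΦ : ∀ v : V, Φ (raagGen Γ v) = Pi.mulSingle (lab v) (Multiplicative.ofAdd 1)) :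
    Subgroup.FG Φ.ker ↔
      ∀ i : Fin d,
        (Γ.induce {v : V | lab v = i}).Connected ∧
        ∀ v : V, lab v ≠ i → ∃ u : V, lab u = i ∧ Γ.Adj v u := by
  constructor
  · intro hfg i
    let χ : RAAG Γ →* Multiplicative ℤ := (Pi.evalMonoidHom _ i).comp Φ
    have hχ (v : V) (hv : v ∈ {v | lab v = i}) : χ (raagGen Γ v) = Multiplicative.ofAdd 1 := by
      simp [χ, hΦ, ← show lab v = i from hv]
    have hχ' (v : V) (hv : v ∉ {v | lab v = i}) : χ (raagGen Γ v) = 1 := by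
      simp [χ, hΦ, Pi.mulSingle_eq_of_ne' hv]
    have hcomm : commutator (RAAG Γ) ≤ Φ.ker := Abelianization.commutator_subset_ker Φ
    have hker : Φ.ker ≤ χ.ker := fun g hg => congr_fun hg i
    have hne : {v | lab v = i}.Nonempty := hlab i
    have := hne.to_subtype
    exact ⟨⟨preconnected_induce_of_fg hcomm hker hχ hχ' hfg⟩,
      isDominating_of_fg hcomm hker hχ hχ' hne hfg⟩
  · intro h
    exact fg_ker_of_connected_of_isDominating hΦ (fun _ _ => commute_raagGen)
      (PresentedGroup.closure_range_of _) (fun i => (h i).1) fun i => (h i).2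
end
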